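/- For every prime p and the field ℚ_p of p-adic numbers, ℚ_p̃ equals {x ∈ ℚ_p : x is algebraic over ℚ}: a p-adic number r admits a finite adequate set if and only if r is algebraic over ℚ. -/

import Mathlib

/-!
If `r` is transcendental, choose a subfield `F` of `ℚ_p` such that `r` is transcendental over `F`
and `ℚ_p` is algebraic over `F(r)` (`exists_field_transcendental`). For each `k`, `r ↦ r + p ^ k`
defines an `F`-embedding of `F(r)` into `ℚ_p`, and these embeddings converge pointwise to the
inclusion (`exists_perturbation`). A finite set `A` generates a finite separable extension of `F(r)`
inside `ℚ_p`; the minimal polynomial of a primitive element has a simple root in `ℚ_p`, which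
survives a small perturbation of the coefficients (`eventually_exists_root`). Hence for large `k`
the embedding extends to `F(r)(A)`, and its restriction to `A` respects all the operations but moves
`r`. So `A` is not adequate.

If `r` is a root of a nonzero integer polynomial `P`, finitely many elements of `ℚ_p` suffice to
force any partial homomorphism `f` to satisfy `P(f r) = 0`, or any other polynomial relation that
holds between given elements (`exists_finset_aeval_eq_zero`). It remains to separate `r` from the
other roots of `P`. For this, an element `z` is integral exactly when `1 + p³ z⁴` is a square; applied
to `z = (r - q) / p ^ N` with `q` a rational number close to `r`, this forces `f r` to be within
`p ^ N` of `r` (`exists_finset_norm_sub_le`), hence equal to `r` once `N` is large.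
-/

/-- A finite set `A ⊆ K` with `r ∈ A` is *adequate* for `r` if every map `f : A → K`
(here represented by its values, as a map `f : K → K` restricted in the hypotheses to `A`)
satisfying (1) `f 1 = 1` whenever `1 ∈ A`, (2) `f (a+b) = f a + f b` whenever `a, b, a+b ∈ A`,
(3) `f (a*b) = f a * f b` whenever `a, b, a*b ∈ A`, also satisfies `f r = r`. -/
def IsAdequate {K : Type*} [Field K] (r : K) (A : Finset K) : Prop :=
  r ∈ A ∧
  ∀ f : K → K,
    ((1 : K) ∈ A → f 1 = 1) →
    (∀ a ∈ A, ∀ b ∈ A, a + b ∈ A → f (a + b) = f a + f b) →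
    (∀ a ∈ A, ∀ b ∈ A, a * b ∈ A → f (a * b) = f a * f b) →
    f r = r

/-- `K̃` is the set of `r ∈ K` admitting a finite adequate set. -/
def KTilde (K : Type*) [Field K] : Set K :=
  {r : K | ∃ A : Finset K, IsAdequate r A}

open Filter Topology Polynomial IntermediateField

/-! ### Transcendental numbers admit no adequate set -/

/-- Simple roots persist: if embeddings `σ k` converge pointwise to `τ` and `θ` is a simple root of
`τ g`, then `σ k g` has a root for all large `k`. This is the open mapping form of the inverse
function theorem, applied to `(c, y) ↦ (c, ∑ cᵢ yⁱ)` at the coefficients of `τ g` and `θ`. -/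
theorem eventually_exists_root {K L : Type*} [NontriviallyNormedField K] [CompleteSpace K]
    [Field L] (g : L[X]) (τ : L →+* K) (σ : ℕ → L →+* K)
    (hσ : ∀ x, Tendsto (fun k ↦ σ k x) atTop (𝓝 (τ x))) (θ : K)
    (h0 : g.eval₂ τ θ = 0) (h1 : g.derivative.eval₂ τ θ ≠ 0) :
    ∀ᶠ k in atTop, ∃ y : K, g.eval₂ (σ k) y = 0 := by
  let n := g.natDegree + 1
  let Φ : (Fin n → K) × K → K := fun q ↦ ∑ i : Fin n, q.1 i * q.2 ^ (i : ℕ)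
  have hΦ (ρ : L →+* K) (y : K) : Φ (fun i ↦ ρ (g.coeff i), y) = g.eval₂ ρ y := by
    rw [eval₂_eq_sum_range, ← Fin.sum_univ_eq_sum_range (fun i ↦ ρ (g.coeff i) * y ^ i)]
  let c₀ : Fin n → K := fun i ↦ τ (g.coeff i)
  have han : AnalyticAt K Φ (c₀, θ) := by
    refine Finset.analyticAt_fun_sum _ fun i _ ↦ ?_
    refine AnalyticAt.mul ?_ (analyticAt_snd.pow _)
    exact ((ContinuousLinearMap.proj (R := K) (φ := fun _ : Fin n ↦ K) i).comp
      (ContinuousLinearMap.fst K (Fin n → K) K)).analyticAt _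
  have hD := han.hasStrictFDerivAt
  set D := fderiv K Φ (c₀, θ)
  have hD1 : D (0, 1) = g.derivative.eval₂ τ θ := by
    have e1 : HasDerivAt (fun y ↦ Φ (c₀, y)) (D (0, 1)) θ :=
      hD.hasFDerivAt.comp_hasDerivAt θ ((hasDerivAt_const θ c₀).prodMk (hasDerivAt_id θ))
    have e2 : HasDerivAt (fun y ↦ Φ (c₀, y)) (g.derivative.eval₂ τ θ) θ := by
      have := (g.map τ).hasDerivAt θ
      rw [derivative_map, eval_map] at this
      refine this.congr_of_eventuallyEq (Eventually.of_forall fun y ↦ ?_)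
      simp only [eval_map]
      exact hΦ τ y
    exact e1.unique e2
  have hΨ := (hasStrictFDerivAt_fst (𝕜 := K) (p := (c₀, θ))).prodMk hD
  -- A preimage of `(u, v)` exists since the partial derivative in `y`, namely `g'(θ)`, is nonzero.
  have hsurj := hΨ.map_nhds_eq_of_surj (by
    rw [LinearMap.range_eq_top]
    rintro ⟨u, v⟩
    refine ⟨(u, (v - D (u, 0)) / D (0, 1)), ?_⟩
    have hne : D (0, 1) ≠ 0 := hD1 ▸ h1
    have key : D (u, (v - D (u, 0)) / D (0, 1)) = v := by
      have : (u, (v - D (u, 0)) / D (0, 1)) =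
          (u, (0 : K)) + ((v - D (u, 0)) / D (0, 1)) • ((0 : Fin n → K), (1 : K)) := by
        ext <;> simp
      rw [this, map_add, map_smul, smul_eq_mul, div_mul_cancel₀ _ hne]
      ring
    exact Prod.ext rfl key)
  have hmem : Set.range (fun q : (Fin n → K) × K ↦ (q.1, Φ q)) ∈ 𝓝 (c₀, (0 : K)) := by
    have : Φ (c₀, θ) = 0 := (hΦ τ θ).trans h0
    rw [← this, ← hsurj]
    exact range_mem_map
  have hlim : Tendsto (fun k ↦ ((fun i : Fin n ↦ σ k (g.coeff i)), (0 : K))) atTop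
      (𝓝 (c₀, 0)) :=
    (tendsto_pi_nhds.2 fun i ↦ hσ _).prodMk_nhds tendsto_const_nhds
  filter_upwards [hlim hmem] with k hk
  obtain ⟨⟨c, y⟩, hq⟩ := hk
  obtain ⟨rfl, hy⟩ := Prod.ext_iff.1 hq
  exact ⟨y, (hΦ (σ k) y).symm.trans hy⟩

theorem exists_extension_of_root {K L M : Type*} [Field K] [Field L] [Field M] [Algebra L M]
    (pb : PowerBasis L M) (σ : L →+* K) (y : K)
    (hy : (minpoly L pb.gen).eval₂ σ y = 0) :
    ∃ φ : M →+* K, ∀ x : L, φ (algebraMap L M x) = σ x := by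
  let e : AdjoinRoot (minpoly L pb.gen) ≃ₐ[L] M :=
    AdjoinRoot.equiv' _ pb (by rw [AdjoinRoot.aeval_eq, AdjoinRoot.mk_self]) (minpoly.aeval _ _)
  refine ⟨(AdjoinRoot.lift σ y hy).comp (e.symm : M →+* AdjoinRoot _), fun x ↦ ?_⟩
  have : e.symm (algebraMap L M x) = AdjoinRoot.of _ x := e.symm.commutes x
  simp [this]

theorem isAlgebraic_of_forall_mem_range {S E K : Type*} [Field S] [Field E] [Field K] [Algebra S K]
    [Algebra E K] [hS : Algebra.IsAlgebraic S K]
    (h : ∀ x : S, algebraMap S K x ∈ Set.range (algebraMap E K)) : Algebra.IsAlgebraic E K := by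
  refine ⟨fun x ↦ ?_⟩
  obtain ⟨P, hP, hPx⟩ := hS.isAlgebraic x
  obtain ⟨Q, hQ⟩ : ∃ Q : E[X], Q.map (algebraMap E K) = P.map (algebraMap S K) :=
    (mem_lifts _).1 ((lifts_iff_coeff_lifts _).2 fun n ↦ by rw [coeff_map]; exact h _)
  refine ⟨Q, fun h0 ↦ ?_, ?_⟩
  · rw [h0, Polynomial.map_zero, eq_comm,
      Polynomial.map_eq_zero_iff (algebraMap S K).injective] at hQ
    exact hP hQ
  · rw [← eval_map_algebraMap, hQ, eval_map_algebraMap, hPx]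

open algebraAdjoinAdjoin in
/-- If `r` is transcendental over `ℚ`, there is a subfield `F` over which `r` is by itself a
transcendence basis of `K`: remove `r` from a transcendence basis of `K / ℚ` containing it. -/
theorem exists_field_transcendental {K : Type*} [Field K] [CharZero K] {r : K}
    (hr : Transcendental ℚ r) :
    ∃ F : IntermediateField ℚ K, Transcendental F r ∧ Algebra.IsAlgebraic F⟮r⟯ K := by
  obtain ⟨t, hrt, ht⟩ := exists_isTranscendenceBasis_superset (R := ℚ) (A := K) (s := {r})
    ((algebraicIndependent_singleton_iff (⟨r, rfl⟩ : ({r} : Set K))).2 hr)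
  have hrt : r ∈ t := hrt rfl
  let S : Set K := Subtype.val '' ({⟨r, hrt⟩}ᶜ : Set t)
  refine ⟨adjoin ℚ S, ?_, ?_⟩
  · have h1 : Transcendental (Algebra.adjoin ℚ S) r :=
      ht.1.transcendental_adjoin (i := ⟨r, hrt⟩) (by simp)
    intro h
    exact h1 ((IsFractionRing.isAlgebraic_iff (Algebra.adjoin ℚ S) (adjoin ℚ S) K).2 h)
  · have := ht.isAlgebraic_field
    generalize hF : adjoin ℚ S = F
    have hle : adjoin ℚ (Set.range (Subtype.val : t → K)) ≤ F⟮r⟯.restrictScalars ℚ := by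
      rw [adjoin_le_iff]
      rintro _ ⟨x, rfl⟩
      by_cases hx : x = ⟨r, hrt⟩
      · rw [hx]
        exact mem_adjoin_simple_self F r
      · have hxF : (x : K) ∈ F := hF ▸ subset_adjoin ℚ S ⟨x, hx, rfl⟩
        exact IntermediateField.algebraMap_mem F⟮r⟯ (⟨x, hxF⟩ : F)
    exact isAlgebraic_of_forall_mem_range
      (S := adjoin ℚ (Set.range (Subtype.val : t → K))) (E := F⟮r⟯) fun x ↦ ⟨⟨x, hle x.2⟩, rfl⟩

/-- If `r` is transcendental over `F` and `‖π‖ < 1`, then `r ↦ r + π ^ k` defines `F`-embeddings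
of `F⟮r⟯` into `K`, because `r + π ^ k` is again transcendental over `F`. They converge pointwise
to the inclusion, the elements where they do so forming a subfield that contains `F` and `r`. -/
theorem exists_perturbation {F K : Type*} [Field F] [NontriviallyNormedField K] [Algebra F K]
    {r : K} (hr : Transcendental F r) (π : F) (hπ : ‖algebraMap F K π‖ < 1) :
    ∃ σ : ℕ → F⟮r⟯ →ₐ[F] K, (∀ k, σ k (AdjoinSimple.gen F r) = r + algebraMap F K π ^ k) ∧
      ∀ x, Tendsto (fun k ↦ σ k x) atTop (𝓝 (algebraMap F⟮r⟯ K x)) := by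
  have htr (k : ℕ) : Transcendental F (r + algebraMap F K π ^ k) := fun h ↦ hr (by
    rw [← map_pow] at h
    simpa using h.sub (isAlgebraic_algebraMap (π ^ k)))
  let σ (k : ℕ) : F⟮r⟯ →ₐ[F] K := F⟮r + algebraMap F K π ^ k⟯.val.comp
    ((RatFunc.algEquivOfTranscendental r hr).symm.trans
      (RatFunc.algEquivOfTranscendental _ (htr k))).toAlgHom
  have hσr (k : ℕ) : σ k (AdjoinSimple.gen F r) = r + algebraMap F K π ^ k := by
    simp [σ]
  refine ⟨σ, hσr, ?_⟩
  clear_value σ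
  rintro ⟨x, hx⟩
  induction hx using adjoin_induction with
  | mem x hx =>
    obtain rfl : x = r := hx
    have : Tendsto (fun k ↦ x + algebraMap F K π ^ k) atTop (𝓝 (x + 0)) :=
      tendsto_const_nhds.add (tendsto_pow_atTop_nhds_zero_of_norm_lt_one hπ)
    rw [add_zero] at this
    exact this.congr fun k ↦ (hσr k).symm
  | algebraMap x => exact tendsto_const_nhds.congr fun k ↦ ((σ k).commutes x).symm
  | add x y hx hy h1 h2 =>
    exact (h1.add h2).congr fun k ↦ (map_add (σ k) ⟨x, hx⟩ ⟨y, hy⟩).symm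
  | mul x y hx hy h1 h2 =>
    exact (h1.mul h2).congr fun k ↦ (map_mul (σ k) ⟨x, hx⟩ ⟨y, hy⟩).symm
  | inv x hx h =>
    by_cases h0 : x = 0
    · subst h0
      have e : (⟨0⁻¹, inv_mem hx⟩ : F⟮r⟯) = 0 := Subtype.ext inv_zero
      simp only [e, map_zero]
      exact tendsto_const_nhds
    · exact (h.inv₀ h0).congr fun k ↦ (map_inv₀ (σ k) ⟨x, hx⟩).symm

/-- Embeddings of `L` close to the inclusion `L → K` extend to any finite extension of `L` inside
`K`: the minimal polynomial of a primitive element keeps a root under the perturbation. -/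
theorem eventually_exists_extension {K L : Type*} [NontriviallyNormedField K] [CompleteSpace K]
    [Field L] [CharZero L] [Algebra L K] [halg : Algebra.IsAlgebraic L K] (σ : ℕ → L →+* K)
    (hσ : ∀ x, Tendsto (fun k ↦ σ k x) atTop (𝓝 (algebraMap L K x))) (A : Finset K) :
    ∀ᶠ k in atTop, ∃ (M : IntermediateField L K) (φ : M →+* K),
      (∀ a ∈ A, a ∈ M) ∧ ∀ x : L, φ (algebraMap L M x) = σ k x := by
  let M : IntermediateField L K := adjoin L (A : Set K)
  have : FiniteDimensional L M :=
    finiteDimensional_adjoin fun x _ ↦ (halg.isAlgebraic x).isIntegral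
  let pb := Field.powerBasisOfFiniteOfSeparable L M
  have hroot := eventually_exists_root (minpoly L pb.gen) (algebraMap L K) σ hσ
    (algebraMap M K pb.gen)
    (by rw [← aeval_def, aeval_algebraMap_apply, minpoly.aeval, map_zero])
    (by
      rw [← aeval_def, aeval_algebraMap_apply, _root_.map_ne_zero]
      exact (Algebra.IsSeparable.isSeparable L pb.gen).aeval_derivative_ne_zero
        (minpoly.aeval _ _))
  filter_upwards [hroot] with k ⟨y, hy⟩
  obtain ⟨φ, hφ⟩ := exists_extension_of_root pb (σ k) y hy
  exact ⟨M, φ, fun a ha ↦ subset_adjoin L (A : Set K) ha, hφ⟩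

/-- A transcendental `r` is moved by some embedding into `K` of a subfield containing `A`. -/
theorem exists_hom_ne {K : Type*} [NontriviallyNormedField K] [CompleteSpace K] [CharZero K]
    {r : K} (hr : Transcendental ℚ r) (A : Finset K) (hrA : r ∈ A) (q : ℚ) (hq0 : q ≠ 0)
    (hq1 : ‖(q : K)‖ < 1) :
    ∃ (M : Subfield K) (φ : M →+* K) (hM : ∀ a ∈ A, a ∈ M), φ ⟨r, hM r hrA⟩ ≠ r := by
  obtain ⟨F, hF, halg⟩ := exists_field_transcendental hr
  obtain ⟨σ, hσr, hlim⟩ := exists_perturbation hF (algebraMap ℚ F q) (by simpa using hq1)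
  obtain ⟨k, M, φ, hM, hφ⟩ :=
    (eventually_exists_extension (fun k ↦ (σ k : F⟮r⟯ →+* K)) hlim A).exists
  refine ⟨M.toSubfield, φ, hM, ?_⟩
  have e := (hφ (AdjoinSimple.gen F r)).trans (hσr k)
  change φ (algebraMap F⟮r⟯ M (AdjoinSimple.gen F r)) ≠ r
  rw [e]
  simpa using fun h ↦ absurd h hq0

theorem isAlgebraic_of_isAdequate {p : ℕ} [Fact p.Prime] {r : ℚ_[p]} {A : Finset ℚ_[p]}
    (h : IsAdequate r A) : IsAlgebraic ℚ r := by
  classical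
  by_contra hr
  obtain ⟨hrA, hA⟩ := h
  obtain ⟨M, φ, hM, hne⟩ := exists_hom_ne hr A hrA p
    (mod_cast (Fact.out : p.Prime).ne_zero) (by simpa using Padic.norm_p_lt_one (p := p))
  let f : ℚ_[p] → ℚ_[p] := fun x ↦ if hx : x ∈ M then φ ⟨x, hx⟩ else 0
  have hf (x) (hx : x ∈ M) : f x = φ ⟨x, hx⟩ := dif_pos hx
  apply hne
  rw [← hf]
  refine hA f (fun h ↦ ?_) (fun a ha b hb hab ↦ ?_) (fun a ha b hb hab ↦ ?_)
  · rw [hf 1 (hM 1 h)]; exact map_one φ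
  · rw [hf _ (hM _ ha), hf _ (hM _ hb), hf _ (hM _ hab)]; exact map_add φ ⟨a, hM a ha⟩ ⟨b, hM b hb⟩
  · rw [hf _ (hM _ ha), hf _ (hM _ hb), hf _ (hM _ hab)]; exact map_mul φ ⟨a, hM a ha⟩ ⟨b, hM b hb⟩

/-! ### Algebraic numbers admit an adequate set -/

/-- The maps that an adequate set quantifies over: `f` respects `1`, and the sums and products of
two elements of `A`, as far as these lie in `A`. Only the values of `f` on `A` matter. -/
structure IsPartialHom {K : Type*} [Field K] (A : Finset K) (f : K → K) : Prop where
  map_one : (1 : K) ∈ A → f 1 = 1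
  map_add : ∀ a ∈ A, ∀ b ∈ A, a + b ∈ A → f (a + b) = f a + f b
  map_mul : ∀ a ∈ A, ∀ b ∈ A, a * b ∈ A → f (a * b) = f a * f b

theorem IsPartialHom.mono {K : Type*} [Field K] {A B : Finset K} {f : K → K}
    (h : IsPartialHom B f) (hAB : A ⊆ B) : IsPartialHom A f :=
  ⟨fun h1 ↦ h.map_one (hAB h1),
    fun a ha b hb hab ↦ h.map_add a (hAB ha) b (hAB hb) (hAB hab),
    fun a ha b hb hab ↦ h.map_mul a (hAB ha) b (hAB hb) (hAB hab)⟩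

/-- A finite set recording the intermediate values of a computation of `P` forces every partial
homomorphism on it to commute with `P`. The variables of `P` are indexed by the elements of `K`, so
that `aeval id P` is its value at these elements and `aeval f P` its value at their images. -/
theorem exists_finset_map_aeval {K : Type*} [Field K] (P : MvPolynomial K ℤ) :
    ∃ A : Finset K, ∀ f : K → K, IsPartialHom A f →
      f (MvPolynomial.aeval id P) = MvPolynomial.aeval f P := by
  classical
  have hadd (P Q : MvPolynomial K ℤ)
      (hP : ∃ A : Finset K, ∀ f : K → K, IsPartialHom A f →
        f (MvPolynomial.aeval id P) = MvPolynomial.aeval f P)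
      (hQ : ∃ A : Finset K, ∀ f : K → K, IsPartialHom A f →
        f (MvPolynomial.aeval id Q) = MvPolynomial.aeval f Q) :
      ∃ A : Finset K, ∀ f : K → K, IsPartialHom A f →
        f (MvPolynomial.aeval id (P + Q)) = MvPolynomial.aeval f (P + Q) := by
    obtain ⟨A, hA⟩ := hP
    obtain ⟨B, hB⟩ := hQ
    set x : K := MvPolynomial.aeval id P
    set y : K := MvPolynomial.aeval id Q
    refine ⟨A ∪ B ∪ {x, y, x + y}, fun f hf ↦ ?_⟩
    rw [map_add, map_add, ← hA f (hf.mono (by grind)), ← hB f (hf.mono (by grind))]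
    exact hf.map_add x (by simp) y (by simp) (by simp)
  have hzero : ∀ f : K → K, IsPartialHom {0} f → f 0 = 0 := fun f hf ↦ by
    simpa using hf.map_add 0 (by simp) 0 (by simp) (by simp)
  induction P using MvPolynomial.induction_on with
  | C n =>
    induction n using Int.induction_on with
    | zero => exact ⟨{0}, fun f hf ↦ by simpa using hzero f hf⟩
    | succ n ih =>
      rw [map_add]
      exact hadd _ _ ih ⟨{1}, fun f hf ↦ by simpa using hf.map_one (by simp)⟩
    | pred n ih =>
      rw [sub_eq_add_neg, map_add]
      refine hadd _ _ ih ⟨{0, 1, -1}, fun f hf ↦ ?_⟩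
      have h0 := hzero f (hf.mono (by simp))
      have h1 := hf.map_one (by simp)
      have h2 := hf.map_add 1 (by simp) (-1) (by simp) (by simp)
      rw [add_neg_cancel, h0, h1] at h2
      simpa using (neg_eq_of_add_eq_zero_right h2.symm).symm
  | add P Q hP hQ => exact hadd P Q hP hQ
  | mul_X P z hP =>
    obtain ⟨A, hA⟩ := hP
    set x : K := MvPolynomial.aeval id P
    refine ⟨A ∪ {x, z, x * z}, fun f hf ↦ ?_⟩
    rw [map_mul, map_mul, ← hA f (hf.mono (by grind)), MvPolynomial.aeval_X, MvPolynomial.aeval_X]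
    exact hf.map_mul x (by simp) z (by simp) (by simp)

/-- Every polynomial relation over `ℤ` between elements of `K` is preserved by all partial
homomorphisms on a suitable finite set. -/
theorem exists_finset_aeval_eq_zero {K : Type*} [Field K] (P : MvPolynomial K ℤ)
    (hP : MvPolynomial.aeval id P = (0 : K)) :
    ∃ A : Finset K, ∀ f : K → K, IsPartialHom A f → MvPolynomial.aeval f P = 0 := by
  classical
  obtain ⟨A, hA⟩ := exists_finset_map_aeval P
  obtain ⟨B, hB⟩ := exists_finset_map_aeval (0 : MvPolynomial K ℤ)
  refine ⟨A ∪ B, fun f hf ↦ ?_⟩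
  have h1 := hA f (hf.mono (by grind))
  have h2 := hB f (hf.mono (by grind))
  rw [hP] at h1
  rw [map_zero, map_zero] at h2
  rw [← h1, h2]

/-- With `norm_le_one_of_sq_eq`, this defines `ℤ_p` in `ℚ_p` existentially, uniformly in `p`:
`z` is integral if and only if `1 + p³ z⁴` is a square. -/
theorem exists_sq_eq_of_norm_le_one {p : ℕ} [hp : Fact p.Prime] {z : ℚ_[p]} (hz : ‖z‖ ≤ 1) :
    ∃ y : ℚ_[p], 1 + (p : ℚ_[p]) ^ 3 * z ^ 4 = y ^ 2 := by
  let t : ℤ_[p] := ⟨z, hz⟩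
  have hp1 : (1 : ℝ) < p := mod_cast hp.out.one_lt
  -- Hensel's condition at `1` reads `‖p³ z⁴‖ < ‖2‖ ^ 2`; the exponent `3` is needed for `p = 2`.
  have h2 : (p : ℝ)⁻¹ ≤ ‖(2 : ℤ_[p])‖ := by
    by_cases h : p = 2
    · subst h
      have := PadicInt.norm_p (p := 2)
      push_cast at this ⊢
      exact this.ge
    · have : ‖((2 : ℕ) : ℤ_[p])‖ = 1 := by
        rw [PadicInt.norm_natCast_eq_one_iff]
        exact (Nat.coprime_primes hp.out Nat.prime_two).2 h
      push_cast at this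
      rw [this]
      exact inv_le_one_of_one_le₀ hp1.le
  have ht : ‖(p : ℤ_[p]) ^ 3 * t ^ 4‖ < ‖(2 : ℤ_[p])‖ ^ 2 := by
    calc ‖(p : ℤ_[p]) ^ 3 * t ^ 4‖ = (p : ℝ)⁻¹ ^ 3 * ‖t‖ ^ 4 := by
          rw [norm_mul, norm_pow, norm_pow, PadicInt.norm_p]
      _ ≤ (p : ℝ)⁻¹ ^ 3 * 1 := by
          gcongr
          exact pow_le_one₀ (norm_nonneg _) t.norm_le_one
      _ < (p : ℝ)⁻¹ ^ 2 := by
          rw [mul_one]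
          exact pow_lt_pow_right_of_lt_one₀ (by positivity) (inv_lt_one_of_one_lt₀ hp1) (by norm_num)
      _ ≤ _ := by gcongr
  obtain ⟨u, hu⟩ : ∃ u : ℤ_[p], u = 1 + (p : ℤ_[p]) ^ 3 * t ^ 4 := ⟨_, rfl⟩
  have hu1 : ‖1 - u‖ < ‖(2 : ℤ_[p])‖ ^ 2 := by
    rwa [hu, sub_add_cancel_left, norm_neg]
  obtain ⟨y, hy, -⟩ := hensels_lemma (p := p) (R := ℤ_[p])
    (F := X ^ 2 - C u) (a := 1) (by
      simpa [one_add_one_eq_two] using hu1)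
  refine ⟨y, ?_⟩
  have hy' : y ^ 2 = 1 + (p : ℤ_[p]) ^ 3 * t ^ 4 := by
    simpa [hu, sub_eq_zero] using hy
  have := congrArg (Subtype.val : ℤ_[p] → ℚ_[p]) hy'
  push_cast at this
  exact this.symm

/-- If `w` is not integral, `1 + p³ w⁴` has the odd valuation `3 + 4 v(w) < 0`, so it is not a
square. -/
theorem norm_le_one_of_sq_eq {p : ℕ} [hp : Fact p.Prime] {w v : ℚ_[p]}
    (h : 1 + (p : ℚ_[p]) ^ 3 * w ^ 4 = v ^ 2) : ‖w‖ ≤ 1 := by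
  by_contra hw
  have hp0 : (p : ℚ_[p]) ≠ 0 := mod_cast hp.out.ne_zero
  have hp1 : (1 : ℝ) < p := mod_cast hp.out.one_lt
  have hw0 : w ≠ 0 := by rintro rfl; simp at hw
  have hval : w.valuation < 0 := by
    rw [Padic.norm_le_one_iff_val_nonneg] at hw
    exact not_le.1 hw
  have hu0 : (p : ℚ_[p]) ^ 3 * w ^ 4 ≠ 0 := by positivity
  have hu : ((p : ℚ_[p]) ^ 3 * w ^ 4).valuation = 3 + 4 * w.valuation := by
    rw [Padic.valuation_mul (pow_ne_zero _ hp0) (pow_ne_zero _ hw0), Padic.valuation_pow,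
      Padic.valuation_pow, Padic.valuation_p]
    push_cast; ring
  have hu1 : 1 < ‖(p : ℚ_[p]) ^ 3 * w ^ 4‖ := by
    rw [← not_le, Padic.norm_le_one_iff_val_nonneg, hu]
    omega
  have hnorm : ‖v ^ 2‖ = ‖(p : ℚ_[p]) ^ 3 * w ^ 4‖ := by
    rw [← h, Padic.add_eq_max_of_ne (by rw [norm_one]; exact hu1.ne), norm_one, max_eq_right hu1.le]
  have hv0 : v ^ 2 ≠ 0 := by
    rw [← norm_ne_zero_iff, hnorm]; positivity
  rw [Padic.norm_eq_zpow_neg_valuation hv0, Padic.norm_eq_zpow_neg_valuation hu0, hu,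
    Padic.valuation_pow] at hnorm
  have := zpow_right_injective₀ (by positivity) hp1.ne' hnorm
  push_cast at this
  omega

/-- Partial homomorphisms on a suitable finite set move `r` by at most `p ^ N`: with `q` rational
close to `r`, the relation `r = q + p ^ N z` and a square root of `1 + p³ z⁴` certify that
`f r = q + p ^ N f z` with `f z` integral. -/
theorem exists_finset_norm_sub_le {p : ℕ} [hp : Fact p.Prime] (r : ℚ_[p]) (N : ℕ) :
    ∃ A : Finset ℚ_[p], ∀ f : ℚ_[p] → ℚ_[p], IsPartialHom A f →
      ‖f r - r‖ ≤ ‖(p : ℚ_[p]) ^ N‖ := by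
  classical
  have hp0 : (p : ℚ_[p]) ≠ 0 := mod_cast hp.out.ne_zero
  have hpN : (p : ℚ_[p]) ^ N ≠ 0 := pow_ne_zero _ hp0
  obtain ⟨q, hq⟩ := Padic.rat_dense p r (norm_pos_iff.2 hpN)
  obtain ⟨z, hz⟩ : ∃ z : ℚ_[p], r - q = (p : ℚ_[p]) ^ N * z := ⟨(r - q) / p ^ N, by field_simp⟩
  have hz1 : ‖z‖ ≤ 1 := by
    rw [hz, norm_mul] at hq
    exact le_of_mul_le_mul_left (by simpa using hq.le) (norm_pos_iff.2 hpN)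
  obtain ⟨y, hy⟩ := exists_sq_eq_of_norm_le_one hz1
  have hden : ((q.den : ℤ) : ℚ_[p]) ≠ 0 := mod_cast q.den_ne_zero
  have hqd : ((q.den : ℤ) : ℚ_[p]) * (q : ℚ_[p]) = (q.num : ℚ_[p]) := by
    exact_mod_cast congrArg (Rat.cast : ℚ → ℚ_[p]) (Rat.den_mul_eq_num q)
  obtain ⟨A, hA⟩ := exists_finset_aeval_eq_zero (K := ℚ_[p])
    (MvPolynomial.C (q.den : ℤ) * (MvPolynomial.X r - MvPolynomial.C ((p : ℤ) ^ N) *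
      MvPolynomial.X z) - MvPolynomial.C q.num) (by
      simp only [map_sub, map_mul, MvPolynomial.aeval_X, map_intCast, eq_intCast, id]
      rw [← hqd]
      push_cast
      rw [← hz]
      ring)
  obtain ⟨B, hB⟩ := exists_finset_aeval_eq_zero (K := ℚ_[p])
    (1 + MvPolynomial.C ((p : ℤ) ^ 3) * MvPolynomial.X z ^ 4 - MvPolynomial.X y ^ 2) (by
      simp [hy])
  refine ⟨A ∪ B, fun f hf ↦ ?_⟩
  have h1 := hA f (hf.mono (by grind))
  have h2 := hB f (hf.mono (by grind))
  simp only [map_sub, map_mul, MvPolynomial.aeval_X, map_intCast, eq_intCast] at h1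
  rw [← hqd, ← mul_sub] at h1
  have h1 := (mul_eq_zero.1 h1).resolve_left hden
  push_cast at h1
  have h3 : ‖f z‖ ≤ 1 := norm_le_one_of_sq_eq (v := f y) (by
    simpa [sub_eq_zero] using h2)
  have h4 : f r - r = (p : ℚ_[p]) ^ N * (f z - z) := by
    linear_combination h1 - hz
  have h5 : ‖f z - z‖ ≤ 1 := by
    rw [sub_eq_add_neg]
    refine (Padic.nonarchimedean _ _).trans (max_le h3 ?_)
    rwa [norm_neg]
  rw [h4, norm_mul]
  exact mul_le_of_le_one_right (norm_nonneg _) h5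

theorem exists_isAdequate {p : ℕ} [hp : Fact p.Prime] {r : ℚ_[p]} (hr : IsAlgebraic ℚ r) :
    ∃ A : Finset ℚ_[p], IsAdequate r A := by
  classical
  obtain ⟨P, hP0, hP⟩ := (IsFractionRing.isAlgebraic_iff ℤ ℚ ℚ_[p]).2 hr
  -- The other roots of `P` in `ℚ_p`, from which `r` is isolated by a ball.
  let R : Finset ℚ_[p] := (P.aroots ℚ_[p]).toFinset.erase r
  have hnhds : ((R : Set ℚ_[p])ᶜ) ∈ 𝓝 r :=
    R.finite_toSet.isClosed.isOpen_compl.mem_nhds (by simp [R])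
  obtain ⟨ε, hε, hball⟩ := Metric.mem_nhds_iff.1 hnhds
  obtain ⟨N, hN⟩ := exists_pow_lt_of_lt_one hε (Padic.norm_p_lt_one (p := p))
  obtain ⟨A, hA⟩ := exists_finset_norm_sub_le r N
  obtain ⟨B, hB⟩ := exists_finset_aeval_eq_zero (K := ℚ_[p])
    (Polynomial.aeval (MvPolynomial.X r) P) (by
      rw [← Polynomial.aeval_algHom_apply, MvPolynomial.aeval_X]
      exact hP)
  refine ⟨A ∪ B ∪ {r}, by simp, fun f h1 h2 h3 ↦ ?_⟩
  have hf : IsPartialHom (A ∪ B ∪ {r}) f := ⟨h1, h2, h3⟩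
  have hroot := hB f (hf.mono (by grind))
  rw [← Polynomial.aeval_algHom_apply, MvPolynomial.aeval_X] at hroot
  have hclose := hA f (hf.mono (by grind))
  have hmem : f r ∉ (R : Set ℚ_[p]) := hball (by
    rw [Metric.mem_ball, dist_eq_norm]
    exact hclose.trans_lt (by rwa [norm_pow]))
  by_contra hne
  exact hmem (Finset.mem_erase.2 ⟨hne, Multiset.mem_toFinset.2 (mem_aroots.2 ⟨hP0, hroot⟩)⟩)

/-- `ℚ_p̃` is the field of `p`-adic numbers algebraic over `ℚ`: a `p`-adic number admits a
finite adequate set iff it is algebraic over `ℚ`. -/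
theorem stmt_14 (p : ℕ) [Fact p.Prime] : KTilde ℚ_[p] = {x : ℚ_[p] | IsAlgebraic ℚ x} := by
  ext r
  exact ⟨fun ⟨_, hA⟩ ↦ isAlgebraic_of_isAdequate hA, exists_isAdequate⟩
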